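/- arXiv:1602.03112 — 4 statements merged into one kernel-verified Lean document; each statement's English description precedes it below -/
import Mathlib

section
/- Let f : ℝ → ℝ be continuously differentiable with f(0) = 0 and f'(0) = 0, let q > 2, and suppose there exist constants C₀ > 0 and T > 0 such that |f'(t)| ≤ C₀|t|^{q-2} for all t with |t| ≥ T. Let F(t) = ∫₀ᵗ f(s) ds. Then for every ε > 0 there exists a constant C_ε > 0 such that (1/2) f(t) t − F(t) ≤ ε t² + C_ε|t|^q for all t ∈ ℝ. -/
theorem stmt_3 (f : ℝ → ℝ) (hf : ContDiff ℝ 1 f) (hf0 : f 0 = 0) (hf'0 : deriv f 0 = 0)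
    (q : ℝ) (hq : 2 < q) (C₀ T : ℝ) (hC₀ : 0 < C₀) (hT : 0 < T)
    (hgrowth : ∀ t : ℝ, T ≤ |t| → |deriv f t| ≤ C₀ * |t| ^ (q - 2))
    (F : ℝ → ℝ) (hF : ∀ t : ℝ, F t = ∫ s in (0:ℝ)..t, f s) :
    ∀ ε : ℝ, 0 < ε → ∃ Cε : ℝ, 0 < Cε ∧
      ∀ t : ℝ, (1/2) * f t * t - F t ≤ ε * t ^ 2 + Cε * |t| ^ q := by
  intro ε hε
  have hcd : Continuous (deriv f) := hf.continuous_deriv le_rfl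
  have hdiff : Differentiable ℝ f := hf.differentiable one_ne_zero
  obtain ⟨δ, hδ, hδ'⟩ := Metric.continuousAt_iff.1 (hcd.continuousAt (x := 0)) (ε / 2) (half_pos hε)
  obtain ⟨K, hK⟩ := (isCompact_Icc (a := -T) (b := T)).exists_bound_of_continuousOn hcd.continuousOn
  have hK0 : 0 ≤ K := (norm_nonneg _).trans (hK 0 ⟨by linarith, hT.le⟩)
  have hδq : 0 < δ ^ (q - 2) := Real.rpow_pos_of_pos hδ _
  obtain ⟨C, hCdef⟩ : ∃ C, C = C₀ + K / δ ^ (q - 2) := ⟨_, rfl⟩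
  have hKd : 0 ≤ K / δ ^ (q - 2) := by positivity
  have hC : 0 < C := by linarith
  have key : ∀ s : ℝ, |deriv f s| ≤ ε / 2 + C * |s| ^ (q - 2) := by
    intro s
    have hs : 0 ≤ |s| ^ (q - 2) := by positivity
    have h1 : 0 ≤ K / δ ^ (q - 2) * |s| ^ (q - 2) := mul_nonneg hKd hs
    have h2 : 0 ≤ C₀ * |s| ^ (q - 2) := mul_nonneg hC₀.le hs
    have h3 : C * |s| ^ (q - 2) = C₀ * |s| ^ (q - 2) + K / δ ^ (q - 2) * |s| ^ (q - 2) := by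
      rw [hCdef]; ring
    rcases lt_or_ge |s| δ with h | h
    · have := hδ' (x := s) (by simpa [Real.dist_eq] using h)
      rw [hf'0, Real.dist_eq, sub_zero] at this
      linarith
    · rcases le_or_gt T |s| with h' | h'
      · have := hgrowth s h'
        linarith
      · have h4 := hK s (abs_le.1 h'.le)
        rw [Real.norm_eq_abs] at h4
        have h5 : δ ^ (q - 2) ≤ |s| ^ (q - 2) := Real.rpow_le_rpow hδ.le h (by linarith)
        have h6 : K / δ ^ (q - 2) * δ ^ (q - 2) ≤ K / δ ^ (q - 2) * |s| ^ (q - 2) :=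
          mul_le_mul_of_nonneg_left h5 hKd
        rw [div_mul_cancel₀ _ hδq.ne'] at h6
        linarith
  refine ⟨3 / 2 * C, by positivity, fun t => ?_⟩
  obtain ⟨M, hM⟩ : ∃ M, M = ε / 2 + C * |t| ^ (q - 2) := ⟨_, rfl⟩
  have hM0 : 0 ≤ M := by rw [hM]; positivity
  have hfb : ∀ s : ℝ, |s| ≤ |t| → |f s| ≤ M * |t| := by
    intro s hs
    have := (convex_Icc (-|t|) |t|).norm_image_sub_le_of_norm_deriv_le (f := f) (C := M)
      (fun x _ => hdiff x) (fun x hx => by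
        rw [Real.norm_eq_abs, hM]
        refine (key x).trans ?_
        have := Real.rpow_le_rpow (abs_nonneg x) (abs_le.2 hx) (by linarith : 0 ≤ q - 2)
        have := mul_le_mul_of_nonneg_left this hC.le
        linarith) (x := 0) (y := s) ⟨by simp, by simp⟩ (abs_le.1 hs)
    rw [hf0, sub_zero, sub_zero, Real.norm_eq_abs, Real.norm_eq_abs] at this
    exact this.trans (mul_le_mul_of_nonneg_left hs hM0)
  have hFb : |F t| ≤ M * |t| * |t| := by
    rw [hF]
    have := intervalIntegral.norm_integral_le_of_norm_le_const (a := 0) (b := t) (f := f)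
      (C := M * |t|) (fun x hx => hfb x (by
        have := Set.abs_sub_left_of_mem_uIcc (Set.uIoc_subset_uIcc hx)
        simpa using this))
    simpa using this
  have hft : |f t * t| ≤ M * |t| * |t| := by
    rw [abs_mul]
    exact mul_le_mul_of_nonneg_right (hfb t le_rfl) (abs_nonneg t)
  have hp : |t| ^ q = |t| ^ (q - 2) * t ^ 2 := by
    have := Real.rpow_add_of_nonneg (abs_nonneg t) (by linarith : 0 ≤ q - 2) (by norm_num : (0:ℝ) ≤ 2)
    rw [sub_add_cancel, Real.rpow_two, sq_abs] at this
    exact this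
  have e : M * |t| * |t| = ε / 2 * t ^ 2 + C * |t| ^ q := by
    rw [hp, mul_assoc, abs_mul_abs_self, hM]; ring
  have a1 := (abs_le.1 hFb).1
  have a2 := (abs_le.1 hft).2
  rw [e] at a1 a2
  have : 0 ≤ ε * t ^ 2 := by positivity
  linarith
end

section
/- Let f : ℝ → ℝ be continuously differentiable with f(0) = 0 and f'(0) = 0, let q > 2, and suppose there exist constants C₀ > 0 and T > 0 such that |f'(t)| ≤ C₀|t|^{q-2} for all t with |t| ≥ T. Let F(t) = ∫₀ᵗ f(s) ds. Then for every ε > 0 there exists a constant C_ε > 0 such that for all a, b ∈ ℝ, |F(a + b) − F(a)| ≤ ε (|a| + |b|)|b| + C_ε (|a| + |b|)^{q-1} |b|. -/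
theorem stmt_4 (f : ℝ → ℝ) (hf : ContDiff ℝ 1 f) (hf0 : f 0 = 0) (hf'0 : deriv f 0 = 0)
    (q : ℝ) (hq : 2 < q) (C₀ T : ℝ) (hC₀ : 0 < C₀) (hT : 0 < T)
    (hgrowth : ∀ t : ℝ, T ≤ |t| → |deriv f t| ≤ C₀ * |t| ^ (q - 2))
    (F : ℝ → ℝ) (hF : ∀ t : ℝ, F t = ∫ s in (0:ℝ)..t, f s) :
    ∀ ε : ℝ, 0 < ε → ∃ Cε : ℝ, 0 < Cε ∧
      ∀ a b : ℝ, |F (a + b) - F a| ≤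
        ε * (|a| + |b|) * |b| + Cε * (|a| + |b|) ^ (q - 1) * |b| := by
  intro ε hε
  have hc : Continuous (deriv f) := hf.continuous_deriv le_rfl
  have hd : Differentiable ℝ f := hf.differentiable one_ne_zero
  obtain ⟨δ, hδ, hδ'⟩ := Metric.continuous_iff.1 hc 0 ε hε
  obtain ⟨M, hM⟩ := (isCompact_Icc (a := -T) (b := T)).exists_bound_of_continuousOn hc.continuousOn
  have hM0 : 0 ≤ M := (norm_nonneg _).trans (hM 0 ⟨by linarith, by linarith⟩)
  have hδp : 0 < δ ^ (q - 2) := Real.rpow_pos_of_pos hδ _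
  set C := C₀ + M / δ ^ (q - 2) with hC
  have hMd : 0 ≤ M / δ ^ (q - 2) := by positivity
  have hCpos : 0 < C := by positivity
  have key : ∀ t, |deriv f t| ≤ ε + C * |t| ^ (q - 2) := by
    intro t
    have ht : 0 ≤ |t| ^ (q - 2) := by positivity
    rcases lt_or_ge |t| δ with h | h
    · have := hδ' t (by simpa using h)
      rw [hf'0, Real.dist_eq, sub_zero] at this
      have : 0 ≤ C * |t| ^ (q - 2) := by positivity
      linarith
    · rcases le_or_gt T |t| with h2 | h2
      · have := hgrowth t h2
        have : 0 ≤ M / δ ^ (q - 2) * |t| ^ (q - 2) := by positivity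
        rw [hC, add_mul]; linarith
      · have h3 := hM t (abs_le.1 h2.le)
        rw [Real.norm_eq_abs] at h3
        have h4 : δ ^ (q - 2) ≤ |t| ^ (q - 2) := Real.rpow_le_rpow hδ.le h (by linarith)
        have h5 : M / δ ^ (q - 2) * δ ^ (q - 2) = M := div_mul_cancel₀ _ hδp.ne'
        have h6 := mul_le_mul_of_nonneg_left h4 hMd
        have : 0 ≤ C₀ * |t| ^ (q - 2) := by positivity
        rw [hC, add_mul]; linarith
  refine ⟨C, hCpos, fun a b => ?_⟩
  set R := |a| + |b| with hR
  have hR0 : 0 ≤ R := by positivity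
  have hfb : ∀ s ∈ Set.Icc (-R) R, |f s| ≤ (ε + C * R ^ (q - 2)) * R := by
    intro s hs
    have := (convex_Icc (-R) R).norm_image_sub_le_of_norm_deriv_le (f := f)
      (C := ε + C * R ^ (q - 2)) (x := 0) (y := s) (fun x _ => hd x) (fun x hx => by
        refine (key x).trans ?_
        have := Real.rpow_le_rpow (abs_nonneg x) (abs_le.2 hx) (z := q - 2) (by linarith)
        gcongr) ⟨by linarith, by linarith⟩ hs
    rw [hf0, sub_zero, sub_zero, Real.norm_eq_abs, Real.norm_eq_abs] at this
    refine this.trans ?_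
    have := abs_le.2 hs
    gcongr
  have hsub : F (a + b) - F a = ∫ s in a..(a + b), f s := by
    rw [hF, hF]
    exact intervalIntegral.integral_interval_sub_left (hf.continuous.intervalIntegrable _ _)
      (hf.continuous.intervalIntegrable _ _)
  have hI := intervalIntegral.norm_integral_le_of_norm_le_const (f := f) (a := a) (b := a + b)
    (C := (ε + C * R ^ (q - 2)) * R) (fun x hx => by
      apply hfb
      have h1 : Set.uIcc a (a + b) ⊆ Set.Icc (-R) R := by
        apply Set.uIcc_subset_Icc
        · exact abs_le.1 (by rw [hR]; linarith [abs_nonneg b])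
        · exact abs_le.1 (abs_add_le a b)
      exact h1 (Set.uIoc_subset_uIcc hx))
  rw [hsub]
  rw [Real.norm_eq_abs, add_sub_cancel_left] at hI
  have hpow : R ^ (q - 1) = R ^ (q - 2) * R := by
    rw [← Real.rpow_add_one' hR0 (by linarith)]
    congr 1; ring
  rw [hpow]
  linarith
end

section
/- Let f : ℝ → ℝ be continuous, F(t) = ∫₀ᵗ f(s) ds, and θ > 2 a real number such that 0 < θ F(t) ≤ t f(t) for all t ≠ 0 (Ambrosetti–Rabinowitz condition). Then m := min(F(1), F(−1)) > 0 and F(t) ≥ m |t|^θ for all t with |t| ≥ 1. -/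
theorem ar_aux (G g : ℝ → ℝ) (θ : ℝ) (hG : ∀ t, HasDerivAt G (g t) t)
    (h : ∀ t, 0 < t → θ * G t ≤ t * g t) (t : ℝ) (ht : 1 ≤ t) : G 1 * t ^ θ ≤ G t := by
  have hd : ∀ x : ℝ, 0 < x → HasDerivAt (fun t => G t * t ^ (-θ))
      (g x * x ^ (-θ) + G x * (-θ * x ^ (-θ - 1))) x := fun x hx =>
    (hG x).mul (Real.hasDerivAt_rpow_const (Or.inl hx.ne'))
  have hm : MonotoneOn (fun t => G t * t ^ (-θ)) (Set.Ici 1) := by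
    apply monotoneOn_of_deriv_nonneg (convex_Ici 1)
    · intro x hx
      exact (hd x (lt_of_lt_of_le one_pos hx)).continuousAt.continuousWithinAt
    · intro x hx
      rw [interior_Ici] at hx
      exact (hd x (lt_trans one_pos hx)).differentiableAt.differentiableWithinAt
    · intro x hx
      rw [interior_Ici] at hx
      have hx0 : 0 < x := lt_trans one_pos hx
      rw [(hd x hx0).deriv]
      have e : x ^ (-θ) = x ^ (-θ - 1) * x := by
        rw [← Real.rpow_add_one hx0.ne']; simp
      have hp : 0 < x ^ (-θ - 1) := Real.rpow_pos_of_pos hx0 _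
      rw [e]
      have := mul_nonneg hp.le (sub_nonneg.2 (h x hx0))
      linarith
  have h1 := hm (Set.mem_Ici.2 le_rfl) (Set.mem_Ici.2 ht) ht
  have ht0 : 0 < t := by linarith
  have hp : 0 < t ^ θ := Real.rpow_pos_of_pos ht0 _
  simp only [Real.one_rpow, mul_one, Real.rpow_neg ht0.le] at h1
  rwa [← div_eq_mul_inv, le_div_iff₀ hp] at h1

theorem stmt_6 (f : ℝ → ℝ) (hf : Continuous f)
    (F : ℝ → ℝ) (hF : ∀ t : ℝ, F t = ∫ s in (0:ℝ)..t, f s)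
    (θ : ℝ) (hθ : 2 < θ)
    (hAR : ∀ t : ℝ, t ≠ 0 → 0 < θ * F t ∧ θ * F t ≤ t * f t) :
    0 < min (F 1) (F (-1)) ∧
      ∀ t : ℝ, 1 ≤ |t| → F t ≥ min (F 1) (F (-1)) * |t| ^ θ := by
  have hθ0 : 0 < θ := by linarith
  have hd : ∀ t, HasDerivAt F (f t) t := by
    intro t
    rw [funext hF]
    exact hf.integral_hasStrictDerivAt 0 t |>.hasDerivAt
  refine ⟨lt_min (pos_of_mul_pos_right (hAR 1 (by norm_num)).1 hθ0.le)
    (pos_of_mul_pos_right (hAR (-1) (by norm_num)).1 hθ0.le), ?_⟩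
  intro t ht
  have hp : 0 ≤ |t| ^ θ := Real.rpow_nonneg (abs_nonneg t) _
  rcases le_total 0 t with h0 | h0
  · have := ar_aux F f θ hd (fun t h => (hAR t h.ne').2) |t| ht
    refine le_trans (mul_le_mul_of_nonneg_right (min_le_left _ _) hp) ?_
    rwa [abs_of_nonneg h0] at this ⊢
  · have := ar_aux (fun t => F (-t)) (fun t => -f (-t)) θ
      (fun t => by
        have h := (hd (-t)).comp t (hasDerivAt_neg t)
        rw [mul_neg_one] at h
        exact h)
      (fun t h => by
        have := (hAR (-t) (neg_ne_zero.2 h.ne')).2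
        linarith) |t| ht
    refine le_trans (mul_le_mul_of_nonneg_right (min_le_right _ _) hp) ?_
    simp only [abs_of_nonpos h0, neg_neg] at this ⊢
    exact this
end

section
/- Let f : ℝ → ℝ be continuous with f(0) = 0, suppose the map t ↦ f(t)/t is nondecreasing on (0, ∞), and set F(t) = ∫₀ᵗ f(s) ds. Then the function H(t) := (1/2) t f(t) − F(t) is nonnegative and nondecreasing on [0, ∞). -/
theorem stmt_7 (f : ℝ → ℝ) (hf : Continuous f) (hf0 : f 0 = 0)
    (hmono : ∀ s t : ℝ, 0 < s → s ≤ t → f s / s ≤ f t / t)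
    (F : ℝ → ℝ) (hF : ∀ t : ℝ, F t = ∫ s in (0:ℝ)..t, f s)
    (H : ℝ → ℝ) (hH : ∀ t : ℝ, H t = (1/2) * t * f t - F t) :
    (∀ t : ℝ, 0 ≤ t → 0 ≤ H t) ∧
      (∀ s t : ℝ, 0 ≤ s → s ≤ t → H s ≤ H t) := by
  have key : ∀ s t : ℝ, 0 ≤ s → s ≤ t → H s ≤ H t := by
    intro s t hs hst
    rcases (hs.trans hst).eq_or_lt with ht | ht
    · have : s = t := by linarith
      rw [this]
    obtain ⟨c, hc⟩ : ∃ c, c = f t / t := ⟨_, rfl⟩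
    have hft : f t = c * t := by rw [hc]; field_simp
    have hb : ∀ x, 0 ≤ x → x ≤ t → f x ≤ c * x := by
      intro x hx hxt
      rcases hx.eq_or_lt with h | h
      · rw [← h, hf0]; simp
      · have := hmono x t h hxt
        rw [← hc] at this
        exact (div_le_iff₀ h).1 this
    have hi : ∫ x in s..t, f x ≤ ∫ x in s..t, c * x := by
      apply intervalIntegral.integral_mono_on hst (hf.intervalIntegrable _ _)
      · exact (continuous_const.mul continuous_id).intervalIntegrable _ _
      · intro x hx
        exact hb x (hs.trans hx.1) hx.2
    have hv : ∫ x in s..t, c * x = c * ((t ^ 2 - s ^ 2) / 2) := by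
      rw [intervalIntegral.integral_const_mul, integral_id]
    have ha := intervalIntegral.integral_add_adjacent_intervals
      (hf.intervalIntegrable (μ := MeasureTheory.volume) 0 s) (hf.intervalIntegrable s t)
    have hm := mul_le_mul_of_nonneg_left (hb s hs hst) hs
    rw [hH, hH, hF, hF, ← ha, hft]
    rw [hv] at hi
    nlinarith
  refine ⟨fun t ht => ?_, key⟩
  have h := key 0 t le_rfl ht
  have h0 : H 0 = 0 := by rw [hH, hF]; simp
  rwa [h0] at h
end
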